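/- arXiv:math/0301381 — 2 statements merged into one kernel-verified Lean document; each statement's English description precedes it below -/
import Mathlib

section
/- Let H be a real Hilbert space, F : H → H continuously Fréchet differentiable, u₀ ∈ H, R > 0, B := {u ∈ H : ‖u − u₀‖ ≤ R}, g₁ positive and locally integrable on [0,∞), g₂ positive and continuous on [0,∞). Suppose u : [0,T] → H is differentiable, u(0) = u₀, u(t) ∈ B for all t ∈ [0,T], u̇(t) = Φ(t,u(t)), and for all u ∈ B and all t ∈ [0,T]: ⟨F′(u)Φ(t,u), F(u)⟩ ≤ −g₁(t)‖F(u)‖² and ‖Φ(t,u)‖ ≤ g₂(t)‖F(u)‖. Then for all 0 ≤ s ≤ t ≤ T: ‖u(t) − u(s)‖ ≤ ‖F(u₀)‖·∫ₛᵗ G(x) dx, where G(x) := g₂(x)·exp(−∫₀ˣ g₁(z) dz). -/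
open MeasureTheory Filter
open scoped RealInnerProductSpace

/-!
Along the trajectory, `‖F (u t)‖²` has derivative `2⟪F' (u t) (Φ t (u t)), F (u t)⟫`, which is at
most `-2 g₁ t ‖F (u t)‖²`. Grönwall's inequality therefore gives
`‖F (u t)‖ ≤ ‖F (u a)‖ exp (-∫ₐᵗ g₁)`. The velocity is bounded by `g₂ t ‖F (u t)‖`, hence by
`‖F (u a)‖ G t`, and integrating this bound gives the estimate.

Since `g₁` is only integrable, `exp ∫ g₁` need not be differentiable everywhere, so it cannot serve
directly as an integrating factor; Grönwall's inequality is obtained instead by integrating the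
logarithmic derivative from the last zero onwards.
-/

section Gronwall

open Set

variable {a b : ℝ} {f f' k : ℝ → ℝ}

theorem le_mul_exp_integral_of_deriv_right_le_of_pos (hab : a ≤ b) (hf : ContinuousOn f (Icc a b))
    (hf' : ∀ x ∈ Ioo a b, HasDerivWithinAt f (f' x) (Ioi x) x)
    (hk : IntervalIntegrable k volume a b) (hle : ∀ x ∈ Ioo a b, f' x ≤ k x * f x)
    (hpos : ∀ x ∈ Icc a b, 0 < f x) :
    f b ≤ f a * Real.exp (∫ x in a..b, k x) := by
  have hfa : 0 < f a := hpos a (left_mem_Icc.2 hab)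
  have hfb : 0 < f b := hpos b (right_mem_Icc.2 hab)
  have log_sub_le : Real.log (f b) - Real.log (f a) ≤ ∫ x in a..b, k x :=
    intervalIntegral.sub_le_integral_of_hasDeriv_right_of_le hab
      (hf.log fun x hx => (hpos x hx).ne')
      (fun x hx => (hf' x hx).log (hpos x (Ioo_subset_Icc_self hx)).ne')
      ((intervalIntegrable_iff_integrableOn_Icc_of_le hab).1 hk)
      (fun x hx => (div_le_iff₀ (hpos x (Ioo_subset_Icc_self hx))).2 (hle x hx))
  calc f b = Real.exp (Real.log (f b)) := (Real.exp_log hfb).symm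
    _ ≤ Real.exp (Real.log (f a) + ∫ x in a..b, k x) := Real.exp_le_exp.2 (by linarith)
    _ = f a * Real.exp (∫ x in a..b, k x) := by rw [Real.exp_add, Real.exp_log hfa]

theorem le_mul_exp_integral_of_deriv_right_le_of_pos_on_Ioc (hab : a ≤ b)
    (hf : ContinuousOn f (Icc a b))
    (hf' : ∀ x ∈ Ioo a b, HasDerivWithinAt f (f' x) (Ioi x) x)
    (hk : IntervalIntegrable k volume a b) (hle : ∀ x ∈ Ioo a b, f' x ≤ k x * f x)
    (hpos : ∀ x ∈ Ioc a b, 0 < f x) :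
    f b ≤ f a * Real.exp (∫ x in a..b, k x) := by
  obtain rfl | hlt := hab.eq_or_lt
  · simp
  have from_interior : ∀ c ∈ Ioc a b, f b ≤ f c * Real.exp (∫ x in c..b, k x) := fun c hc =>
    have hsub : Ioo c b ⊆ Ioo a b := Ioo_subset_Ioo_left hc.1.le
    le_mul_exp_integral_of_deriv_right_le_of_pos hc.2 (hf.mono (Icc_subset_Icc_left hc.1.le))
      (fun x hx => hf' x (hsub hx))
      (hk.mono_set (uIcc_subset_uIcc (Icc_subset_uIcc ⟨hc.1.le, hc.2⟩) right_mem_uIcc))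
      (fun x hx => hle x (hsub hx)) (fun x hx => hpos x ⟨hc.1.trans_le hx.1, hx.2⟩)
  have primitive_continuous : ContinuousOn (fun c => ∫ x in c..b, k x) (Icc a b) := by
    rw [← uIcc_of_le hab]
    exact intervalIntegral.continuousOn_primitive_interval_left ((intervalIntegrable_iff').1 hk)
  have hclosure : closure (Ioc a b) = Icc a b := closure_Ioc hlt.ne
  refine le_on_closure from_interior continuousOn_const ?_
    (hclosure ▸ left_mem_Icc.2 hab : a ∈ closure (Ioc a b))
  rw [hclosure]
  exact hf.mul primitive_continuous.rexp

theorem le_mul_exp_integral_of_deriv_right_le (hab : a ≤ b) (hf : ContinuousOn f (Icc a b))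
    (hf' : ∀ x ∈ Ioo a b, HasDerivWithinAt f (f' x) (Ioi x) x)
    (hk : IntervalIntegrable k volume a b) (hle : ∀ x ∈ Ioo a b, f' x ≤ k x * f x)
    (ha : 0 ≤ f a) :
    f b ≤ f a * Real.exp (∫ x in a..b, k x) := by
  by_cases hpos : ∀ x ∈ Icc a b, 0 < f x
  · exact le_mul_exp_integral_of_deriv_right_le_of_pos hab hf hf' hk hle hpos
  push Not at hpos
  suffices f b ≤ 0 from this.trans (by positivity)
  have compact_nonpos : IsCompact (Icc a b ∩ f ⁻¹' Iic 0) :=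
    isCompact_Icc.of_isClosed_subset (hf.preimage_isClosed_of_isClosed isClosed_Icc isClosed_Iic)
      inter_subset_left
  obtain ⟨c, ⟨hc, hfc⟩, hlast⟩ := compact_nonpos.exists_isGreatest hpos
  have pos_after : ∀ x ∈ Ioc c b, 0 < f x := fun x hx => by
    by_contra! hfx
    exact hx.1.not_ge (hlast ⟨⟨hc.1.trans hx.1.le, hx.2⟩, hfx⟩)
  have hsub : Ioo c b ⊆ Ioo a b := Ioo_subset_Ioo_left hc.1
  calc f b ≤ f c * Real.exp (∫ x in c..b, k x) :=
        le_mul_exp_integral_of_deriv_right_le_of_pos_on_Ioc hc.2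
          (hf.mono (Icc_subset_Icc_left hc.1)) (fun x hx => hf' x (hsub hx))
          (hk.mono_set (uIcc_subset_uIcc (Icc_subset_uIcc hc) right_mem_uIcc))
          (fun x hx => hle x (hsub hx)) pos_after
    _ ≤ 0 := mul_nonpos_of_nonpos_of_nonneg hfc (Real.exp_pos _).le

end Gronwall

section Trajectory

open Set

variable {E K : Type*} [NormedAddCommGroup E] [NormedSpace ℝ E] [NormedAddCommGroup K]
  [InnerProductSpace ℝ K] {a b : ℝ} {g₁ g₂ : ℝ → ℝ}

theorem norm_le_mul_exp_neg_integral_of_inner_deriv_right_le {y y' : ℝ → K} (hab : a ≤ b)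
    (hy : ContinuousOn y (Icc a b)) (hy' : ∀ t ∈ Ioo a b, HasDerivWithinAt y (y' t) (Ioi t) t)
    (hg₁ : IntervalIntegrable g₁ volume a b)
    (hinner : ∀ t ∈ Ioo a b, ⟪y' t, y t⟫ ≤ -g₁ t * ‖y t‖ ^ 2) :
    ‖y b‖ ≤ ‖y a‖ * Real.exp (-∫ t in a..b, g₁ t) := by
  have sq_le : ‖y b‖ ^ 2 ≤ ‖y a‖ ^ 2 * Real.exp (∫ t in a..b, -2 * g₁ t) := by
    refine le_mul_exp_integral_of_deriv_right_le (f := fun t => ‖y t‖ ^ 2) hab (hy.norm.pow 2)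
      (fun t ht => (hy' t ht).norm_sq) (hg₁.const_mul (-2)) (fun t ht => ?_) (sq_nonneg _)
    rw [real_inner_comm]
    linarith [hinner t ht]
  have exp_eq : Real.exp (∫ t in a..b, -2 * g₁ t) = Real.exp (-∫ t in a..b, g₁ t) ^ 2 := by
    rw [intervalIntegral.integral_const_mul, ← Real.exp_nat_mul]
    push_cast
    ring_nf
  rw [exp_eq, ← mul_pow] at sq_le
  exact (sq_le_sq₀ (norm_nonneg _) (by positivity)).1 sq_le

theorem intervalIntegrable_mul_exp_neg_integral (hg₁ : IntervalIntegrable g₁ volume a b)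
    (hg₂ : IntervalIntegrable g₂ volume a b) :
    IntervalIntegrable (fun x => g₂ x * Real.exp (-∫ z in a..x, g₁ z)) volume a b :=
  hg₂.mul_continuousOn
    (intervalIntegral.continuousOn_primitive_interval' hg₁ left_mem_uIcc).neg.rexp

theorem norm_sub_le_mul_integral_of_norm_deriv_le_mul_norm {u u' : ℝ → E} {y y' : ℝ → K}
    (hu : ContinuousOn u (Icc a b)) (hu' : ∀ t ∈ Ioo a b, HasDerivAt u (u' t) t)
    (hy : ContinuousOn y (Icc a b)) (hy' : ∀ t ∈ Ioo a b, HasDerivWithinAt y (y' t) (Ioi t) t)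
    (hg₁ : IntervalIntegrable g₁ volume a b) (hg₂ : IntervalIntegrable g₂ volume a b)
    (hg₂_nonneg : ∀ t ∈ Ioo a b, 0 ≤ g₂ t)
    (hinner : ∀ t ∈ Ioo a b, ⟪y' t, y t⟫ ≤ -g₁ t * ‖y t‖ ^ 2)
    (hnorm : ∀ t ∈ Ioo a b, ‖u' t‖ ≤ g₂ t * ‖y t‖)
    {s t : ℝ} (has : a ≤ s) (hst : s ≤ t) (htb : t ≤ b) :
    ‖u t - u s‖ ≤ ‖y a‖ * ∫ x in s..t, g₂ x * Real.exp (-∫ z in a..x, g₁ z) := by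
  have decay : ∀ x ∈ Ioo a b, ‖y x‖ ≤ ‖y a‖ * Real.exp (-∫ z in a..x, g₁ z) := fun x hx =>
    have hsub : Ioo a x ⊆ Ioo a b := Ioo_subset_Ioo_right hx.2.le
    norm_le_mul_exp_neg_integral_of_inner_deriv_right_le hx.1.le
      (hy.mono (Icc_subset_Icc_right hx.2.le)) (fun z hz => hy' z (hsub hz))
      (hg₁.mono_set (uIcc_subset_uIcc left_mem_uIcc (Icc_subset_uIcc (Ioo_subset_Icc_self hx))))
      (fun z hz => hinner z (hsub hz))
  have speed_le : ∀ x ∈ Ioo a b,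
      ‖u' x‖ ≤ ‖y a‖ * (g₂ x * Real.exp (-∫ z in a..x, g₁ z)) := fun x hx =>
    calc ‖u' x‖ ≤ g₂ x * ‖y x‖ := hnorm x hx
      _ ≤ g₂ x * (‖y a‖ * Real.exp (-∫ z in a..x, g₁ z)) :=
        mul_le_mul_of_nonneg_left (decay x hx) (hg₂_nonneg x hx)
      _ = ‖y a‖ * (g₂ x * Real.exp (-∫ z in a..x, g₁ z)) := mul_left_comm _ _ _
  have hsub : Ioo s t ⊆ Ioo a b := Ioo_subset_Ioo has htb
  have hsub_uIcc : uIcc s t ⊆ uIcc a b :=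
    uIcc_subset_uIcc (Icc_subset_uIcc ⟨has, hst.trans htb⟩) (Icc_subset_uIcc ⟨has.trans hst, htb⟩)
  rw [← intervalIntegral.integral_const_mul]
  exact norm_sub_le_integral_of_norm_deriv_le_of_le hst (hu.mono (Icc_subset_Icc has htb))
    (fun x hx => (hu' x (hsub hx)).differentiableAt.differentiableWithinAt)
    (Eventually.of_forall fun x hx => (hu' x (hsub hx)).deriv ▸ speed_le x (hsub hx))
    (((intervalIntegrable_mul_exp_neg_integral hg₁ hg₂).mono_set hsub_uIcc).const_mul _)

theorem dsm_cauchy_estimate_general {F : E → K} {F' : E → E →L[ℝ] K} {B : Set E}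
    {Φ : ℝ → E → E} {u : ℝ → E}
    (hF : ∀ t ∈ Icc a b, HasFDerivWithinAt F (F' (u t)) B (u t)) (huB : ∀ t ∈ Icc a b, u t ∈ B)
    (hu : ContinuousOn u (Icc a b)) (hu' : ∀ t ∈ Ioo a b, HasDerivAt u (Φ t (u t)) t)
    (hg₁ : IntervalIntegrable g₁ volume a b) (hg₂ : IntervalIntegrable g₂ volume a b)
    (hg₂_nonneg : ∀ t ∈ Ioo a b, 0 ≤ g₂ t)
    (hinner : ∀ t ∈ Ioo a b, ⟪F' (u t) (Φ t (u t)), F (u t)⟫ ≤ -g₁ t * ‖F (u t)‖ ^ 2)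
    (hnorm : ∀ t ∈ Ioo a b, ‖Φ t (u t)‖ ≤ g₂ t * ‖F (u t)‖)
    {s t : ℝ} (has : a ≤ s) (hst : s ≤ t) (htb : t ≤ b) :
    ‖u t - u s‖ ≤ ‖F (u a)‖ * ∫ x in s..t, g₂ x * Real.exp (-∫ z in a..x, g₁ z) := by
  have F_cont : ContinuousOn (F ∘ u) (Icc a b) := fun x hx =>
    (hF x hx).continuousWithinAt.comp (hu x hx) huB
  have F_deriv : ∀ x ∈ Ioo a b, HasDerivAt (F ∘ u) (F' (u x) (Φ x (u x))) x := fun x hx =>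
    (hF x (Ioo_subset_Icc_self hx)).comp_hasDerivAt x (hu' x hx)
      (mem_of_superset (Icc_mem_nhds hx.1 hx.2) huB)
  exact norm_sub_le_mul_integral_of_norm_deriv_le_mul_norm hu hu' F_cont
    (fun x hx => (F_deriv x hx).hasDerivWithinAt) hg₁ hg₂ hg₂_nonneg hinner hnorm has hst htb

end Trajectory

/-- Inequality (2.1): along a solution of `u̇ = Φ(t,u)` staying in the ball `B`,
under (1.2) and (1.3) one has `‖u(t)−u(s)‖ ≤ ‖F(u₀)‖ ∫ₛᵗ G(x) dx`, where
`G(x) = g₂(x) exp(−∫₀ˣ g₁)`. -/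
theorem dsm_cauchy_estimate
    {H : Type*} [NormedAddCommGroup H] [InnerProductSpace ℝ H] [CompleteSpace H]
    (F : H → H) (F' : H → H →L[ℝ] H)
    (hF : ∀ u : H, HasFDerivAt F (F' u) u)
    (hF'cont : Continuous F')
    (u₀ : H) (R : ℝ) (hR : 0 < R)
    (B : Set H) (hB : B = {u : H | ‖u - u₀‖ ≤ R})
    (g₁ g₂ : ℝ → ℝ)
    (hg₁pos : ∀ t ≥ (0:ℝ), 0 < g₁ t)
    (hg₁loc : ∀ t ≥ (0:ℝ), IntervalIntegrable g₁ volume 0 t)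
    (hg₂pos : ∀ t ≥ (0:ℝ), 0 < g₂ t)
    (hg₂cont : ContinuousOn g₂ (Set.Ici (0:ℝ)))
    (T : ℝ) (hT : 0 ≤ T)
    (Φ : ℝ → H → H)
    (u : ℝ → H) (hu0 : u 0 = u₀)
    (huB : ∀ t ∈ Set.Icc (0:ℝ) T, u t ∈ B)
    (hu' : ∀ t ∈ Set.Icc (0:ℝ) T, HasDerivAt u (Φ t (u t)) t)
    (h12 : ∀ t ∈ Set.Icc (0:ℝ) T, ∀ v ∈ B, ⟪F' v (Φ t v), F v⟫ ≤ -(g₁ t) * ‖F v‖ ^ 2)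
    (h13 : ∀ t ∈ Set.Icc (0:ℝ) T, ∀ v ∈ B, ‖Φ t v‖ ≤ g₂ t * ‖F v‖)
    (G : ℝ → ℝ) (hG : G = fun x => g₂ x * Real.exp (-∫ z in (0:ℝ)..x, g₁ z)) :
    ∀ s t : ℝ, 0 ≤ s → s ≤ t → t ≤ T →
      ‖u t - u s‖ ≤ ‖F u₀‖ * ∫ x in s..t, G x := by
  subst hu0 hB hG
  intro s t hs hst htT
  have hIoo : Set.Ioo 0 T ⊆ Set.Icc 0 T := Set.Ioo_subset_Icc_self
  exact dsm_cauchy_estimate_general (fun x _ => (hF (u x)).hasFDerivWithinAt) huB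
    (fun x hx => (hu' x hx).continuousAt.continuousWithinAt) (fun x hx => hu' x (hIoo hx))
    (hg₁loc T hT) ((hg₂cont.mono fun x hx => hx.1).intervalIntegrable_of_Icc hT)
    (fun x hx => (hg₂pos x hx.1.le).le) (fun x hx => h12 x (hIoo hx) (u x) (huB x (hIoo hx)))
    (fun x hx => h13 x (hIoo hx) (u x) (huB x (hIoo hx))) hs hst htT
end

section
/- Let H be a real Hilbert space, F : H → H Fréchet differentiable, u₀ ∈ H with F(u₀) ≠ 0, R > 0, B := {u ∈ H : ‖u − u₀‖ ≤ R}. Let Φ : [0,∞) × H → H be continuous in t and Lipschitz in u on B, let g₁, g₂ be positive functions on [0,∞) with g₂ continuous and g₁ locally integrable, and let a > 2. Define h(t) := [‖F(u₀)‖^{−(a−2)} + (a−2)·∫₀ᵗ g₁(s) ds]^{−1/(a−2)}. Assume: (i) ⟨F′(u)Φ(t,u), F(u)⟩ ≤ −g₁(t)‖F(u)‖^a for all u ∈ B and t ≥ 0; (ii) ‖Φ(t,u)‖ ≤ g₂(t)‖F(u)‖ for all u ∈ B and t ≥ 0; (iii) ∫₀^∞ g₁(t) dt = +∞; (iv) ∫₀^∞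 g₂(s)·h(s) ds ≤ R. Then the Cauchy problem u̇(t) = Φ(t,u(t)), u(0) = u₀ has a global solution u with u(t) ∈ B for all t ≥ 0, the strong limit y := lim_{t→∞} u(t) exists, y ∈ B, and F(y) = 0. -/
open MeasureTheory Filter
open scoped RealInnerProductSpace

/-! Composing `Φ` with the radial retraction onto `B` gives a globally Lipschitz field, whose
integral curve `u` solves the original equation as long as it stays in `B`. As long as it does,
`q = ‖F ∘ u‖` satisfies `q' ≤ -g₁ q ^ (a - 1)`, so comparison with the Bernoulli equation gives
`q ≤ h`; hence `‖u'‖ ≤ g₂ h`, and `u` has moved by strictly less than `∫₀^∞ g₂ h ≤ R`. It can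
therefore never reach the boundary of `B`. Its speed being integrable, `u` converges, and `F`
vanishes at the limit because `h → 0`. -/

open Set Metric
open scoped NNReal Topology

section RadialRetraction

variable {E : Type*} [NormedAddCommGroup E] [NormedSpace ℝ E]

/-- The radial retraction of a normed space onto the closed ball of centre `c` and radius `R`,
used to extend a vector field from the ball to the whole space. At `x = c` the quotient `R / 0`
is `0`, which is harmless as it multiplies `x - c = 0`. -/
noncomputable def radialRetraction (c : E) (R : ℝ) (x : E) : E :=
  c + min 1 (R / ‖x - c‖) • (x - c)

variable {c : E} {R : ℝ}

lemma min_one_div_mul_self (hR : 0 ≤ R) {r : ℝ} (hr : 0 ≤ r) : min 1 (R / r) * r = min r R := by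
  rcases hr.eq_or_lt with rfl | hr
  · simp [hR]
  · rw [min_mul_of_nonneg _ _ hr.le, one_mul, div_mul_cancel₀ _ hr.ne']

lemma radialRetraction_mem_closedBall (hR : 0 ≤ R) (x : E) :
    radialRetraction c R x ∈ closedBall c R := by
  have hscale : 0 ≤ min 1 (R / ‖x - c‖) := by positivity
  rw [mem_closedBall_iff_norm, radialRetraction, add_sub_cancel_left, norm_smul,
    Real.norm_of_nonneg hscale, min_one_div_mul_self hR (norm_nonneg _)]
  exact min_le_right _ _

lemma radialRetraction_of_mem_closedBall {x : E} (hx : x ∈ closedBall c R) :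
    radialRetraction c R x = x := by
  rcases eq_or_ne x c with rfl | hxc
  · simp [radialRetraction]
  · have hpos : 0 < ‖x - c‖ := norm_sub_pos_iff.2 hxc
    have hscale : 1 ≤ R / ‖x - c‖ := (one_le_div hpos).2 (mem_closedBall_iff_norm.1 hx)
    rw [radialRetraction, min_eq_left hscale, one_smul, add_sub_cancel]

lemma abs_min_one_div_sub_mul_le (hR : 0 ≤ R) {r s : ℝ} (hs : 0 ≤ s) (hsr : s ≤ r) :
    |min 1 (R / r) - min 1 (R / s)| * s ≤ r - s := by
  have hr : 0 ≤ r := hs.trans hsr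
  set k := min 1 (R / r)
  have hk_nonneg : 0 ≤ k := by positivity
  have hk_le_one : k ≤ 1 := min_le_left _ _
  have hkr : k * r = min r R := min_one_div_mul_self hR hr
  have hks : k * s ≤ min s R :=
    le_min (mul_le_of_le_one_left hs hk_le_one)
      ((mul_le_mul_of_nonneg_left hsr hk_nonneg).trans (hkr ▸ min_le_right r R))
  have hmin : min s R ≤ k * r := hkr ▸ min_le_min_right R hsr
  have hgap : k * r - k * s ≤ r - s := by
    rw [← mul_sub]
    exact mul_le_of_le_one_left (sub_nonneg.2 hsr) hk_le_one
  rw [← abs_of_nonneg hs, ← abs_mul, abs_of_nonneg hs, sub_mul, min_one_div_mul_self hR hs, abs_le]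
  constructor <;> linarith

lemma lipschitzWith_radialRetraction (hR : 0 ≤ R) : LipschitzWith 2 (radialRetraction c R) := by
  refine LipschitzWith.of_dist_le_mul fun x y => ?_
  wlog hyx : ‖y - c‖ ≤ ‖x - c‖ generalizing x y
  · rw [dist_comm, dist_comm x]
    exact this y x (le_of_not_ge hyx)
  set k : E → ℝ := fun z => min 1 (R / ‖z - c‖) with hk
  have hk_nonneg : 0 ≤ k x := by positivity
  have hk_le_one : k x ≤ 1 := min_le_left _ _
  have hscale : |k x - k y| * ‖y - c‖ ≤ ‖x - y‖ :=
    (abs_min_one_div_sub_mul_le hR (norm_nonneg _) hyx).trans <| by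
      simpa only [sub_sub_sub_cancel_right] using norm_sub_norm_le (x - c) (y - c)
  have hsplit : radialRetraction c R x - radialRetraction c R y =
      k x • (x - y) + (k x - k y) • (y - c) := by
    simp only [radialRetraction, hk]
    module
  calc dist (radialRetraction c R x) (radialRetraction c R y)
      ≤ k x * ‖x - y‖ + |k x - k y| * ‖y - c‖ := by
        rw [dist_eq_norm, hsplit]
        refine (norm_add_le _ _).trans_eq ?_
        rw [norm_smul, norm_smul, Real.norm_of_nonneg hk_nonneg, Real.norm_eq_abs]
    _ ≤ ‖x - y‖ + ‖x - y‖ :=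
        add_le_add (mul_le_of_le_one_left (norm_nonneg _) hk_le_one) hscale
    _ = (2 : ℝ≥0) * dist x y := by
        rw [dist_eq_norm, NNReal.coe_ofNat, two_mul]

end RadialRetraction

section Existence

variable {E : Type*} [NormedAddCommGroup E] [NormedSpace ℝ E] [CompleteSpace E]

lemma exists_isIntegralCurveOn_Ioo {v : ℝ → E → E} {T C : ℝ} {K : ℝ≥0} (hT : 0 ≤ T)
    (hlip : ∀ t ∈ Icc (-T) T, LipschitzWith K (v t))
    (hcont : ∀ x, ContinuousOn (fun t => v t x) (Icc (-T) T))
    (hbdd : ∀ t ∈ Icc (-T) T, ∀ x, ‖v t x‖ ≤ C) (x₀ : E) :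
    ∃ u : ℝ → E, u 0 = x₀ ∧ IsIntegralCurveOn u v (Ioo (-T) T) := by
  have hpl : IsPicardLindelof v (tmin := -T) (tmax := T) ⟨0, neg_nonpos.2 hT, hT⟩ x₀
      (C.toNNReal * T.toNNReal) 0 C.toNNReal K :=
    { lipschitzOnWith := fun t ht => (hlip t ht).lipschitzOnWith
      continuousOn := fun x _ => hcont x
      norm_le := fun t ht x _ => (hbdd t ht x).trans (Real.le_coe_toNNReal C)
      mul_max_le := by simp [hT] }
  obtain ⟨u, hu0, hu⟩ := hpl.exists_eq_forall_mem_Icc_hasDerivWithinAt₀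
  exact ⟨u, hu0, fun t ht => (hu t (Ioo_subset_Icc_self ht)).mono Ioo_subset_Icc_self⟩

lemma exists_isIntegralCurve_of_lipschitzWith {v : ℝ → E → E}
    (hlip : ∀ T : ℝ, ∃ K : ℝ≥0, ∀ t ∈ Icc (-T) T, LipschitzWith K (v t))
    (hcont : ∀ x, Continuous fun t => v t x)
    (hbdd : ∀ T : ℝ, ∃ C : ℝ, ∀ t ∈ Icc (-T) T, ∀ x, ‖v t x‖ ≤ C) (x₀ : E) :
    ∃ u : ℝ → E, u 0 = x₀ ∧ IsIntegralCurve u v := by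
  set I : ℕ → Set ℝ := fun n => Ioo (-(n + 1 : ℝ)) (n + 1)
  have hlocal (n : ℕ) : ∃ u : ℝ → E, u 0 = x₀ ∧ IsIntegralCurveOn u v (I n) := by
    obtain ⟨K, hK⟩ := hlip (n + 1)
    obtain ⟨C, hC⟩ := hbdd (n + 1)
    exact exists_isIntegralCurveOn_Ioo (by positivity) hK (fun x => (hcont x).continuousOn) hC x₀
  choose u hu0 hu using hlocal
  have hderiv {n : ℕ} {t : ℝ} (ht : t ∈ I n) : HasDerivAt (u n) (v t (u n t)) t :=
    (hu n t ht).hasDerivAt (isOpen_Ioo.mem_nhds ht)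
  have hmono {m n : ℕ} (hmn : m ≤ n) : I m ⊆ I n := by
    have : (m : ℝ) ≤ n := by exact_mod_cast hmn
    exact Ioo_subset_Ioo (by linarith) (by linarith)
  have hunique {m n : ℕ} (hmn : m ≤ n) : EqOn (u m) (u n) (I m) := by
    obtain ⟨K, hK⟩ := hlip (m + 1)
    have hzero : (0 : ℝ) ∈ I m := by constructor <;> linarith [m.cast_nonneg (α := ℝ)]
    exact ODE_solution_unique_of_mem_Ioo (s := fun _ => univ)
      (fun t ht => (hK t (Ioo_subset_Icc_self ht)).lipschitzOnWith) hzero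
      (fun t ht => ⟨hderiv ht, mem_univ _⟩) (fun t ht => ⟨hderiv (hmono hmn ht), mem_univ _⟩)
      ((hu0 m).trans (hu0 n).symm)
  have hmem (t : ℝ) : t ∈ I ⌈|t|⌉₊ := by
    have := abs_le.1 (Nat.le_ceil |t|)
    constructor <;> linarith
  refine ⟨fun t => u ⌈|t|⌉₊ t, by simp [hu0], fun t => (hderiv (hmem t)).congr_of_eventuallyEq ?_⟩
  filter_upwards [isOpen_Ioo.mem_nhds (hmem t)] with s hs
  rcases le_total ⌈|s|⌉₊ ⌈|t|⌉₊ with hst | hts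
  · exact hunique hst (hmem s)
  · exact (hunique hts hs).symm

variable {Φ : ℝ → E → E} {x₀ : E} {R : ℝ}

lemma exists_continuous_hasDerivAt_of_mem_closedBall (hR : 0 ≤ R)
    (hcont : ∀ x ∈ closedBall x₀ R, ContinuousOn (fun t => Φ t x) (Ici 0))
    (hlip : ∀ T : ℝ, ∃ L : ℝ≥0, ∀ t ∈ Icc 0 T, LipschitzOnWith L (Φ t) (closedBall x₀ R)) :
    ∃ u : ℝ → E, u 0 = x₀ ∧ Continuous u ∧
      ∀ t ≥ 0, u t ∈ closedBall x₀ R → HasDerivAt u (Φ t (u t)) t := by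
  set P : E → E := radialRetraction x₀ R
  have hP (x : E) : P x ∈ closedBall x₀ R := radialRetraction_mem_closedBall hR x
  set v : ℝ → E → E := fun t x => Φ (max t 0) (P x) with hv
  have hclamp {t T : ℝ} (ht : t ∈ Icc (-T) T) : max t 0 ∈ Icc 0 T :=
    ⟨le_max_right _ _, max_le ht.2 (by linarith [ht.1, ht.2])⟩
  have hvcont (x : E) : Continuous fun t => v t x :=
    (hcont (P x) (hP x)).comp_continuous (by fun_prop) fun t => le_max_right t 0
  have hvlip (T : ℝ) : ∃ K : ℝ≥0, ∀ t ∈ Icc (-T) T, LipschitzWith K (v t) := by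
    obtain ⟨L, hL⟩ := hlip T
    refine ⟨L * 2, fun t ht => lipschitzOnWith_univ.1 ?_⟩
    exact (hL _ (hclamp ht)).comp (lipschitzWith_radialRetraction hR).lipschitzOnWith
      fun x _ => hP x
  have hvbdd (T : ℝ) : ∃ C : ℝ, ∀ t ∈ Icc (-T) T, ∀ x, ‖v t x‖ ≤ C := by
    obtain ⟨L, hL⟩ := hlip T
    obtain ⟨C, hC⟩ := isCompact_Icc.exists_bound_of_continuousOn
      ((hcont x₀ (mem_closedBall_self hR)).mono (Icc_subset_Ici_self : Icc 0 T ⊆ Ici 0))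
    refine ⟨L * R + C, fun t ht x => ?_⟩
    calc ‖v t x‖ ≤ dist (v t x) (Φ (max t 0) x₀) + ‖Φ (max t 0) x₀‖ := by
          simpa [dist_eq_norm] using norm_add_le (v t x - Φ (max t 0) x₀) (Φ (max t 0) x₀)
      _ ≤ L * R + C := add_le_add
          (((hL _ (hclamp ht)).dist_le_mul _ (hP x) _ (mem_closedBall_self hR)).trans
            (mul_le_mul_of_nonneg_left (hP x) L.2)) (hC _ (hclamp ht))
  obtain ⟨u, hu0, hu⟩ := exists_isIntegralCurve_of_lipschitzWith hvlip hvcont hvbdd x₀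
  refine ⟨u, hu0, hu.continuous, fun t ht hut => ?_⟩
  simpa only [hv, max_eq_left ht, P, radialRetraction_of_mem_closedBall hut] using hu t

lemma exists_hasDerivAt_mem_closedBall_of_apriori (hR : 0 ≤ R)
    (hcont : ∀ x ∈ closedBall x₀ R, ContinuousOn (fun t => Φ t x) (Ici 0))
    (hlip : ∀ T : ℝ, ∃ L : ℝ≥0, ∀ t ∈ Icc 0 T, LipschitzOnWith L (Φ t) (closedBall x₀ R))
    (hapriori : ∀ (u : ℝ → E) (T : ℝ), 0 ≤ T → u 0 = x₀ → IsIntegralCurveOn u Φ (Icc 0 T) →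
      MapsTo u (Icc 0 T) (closedBall x₀ R) → u T ∈ ball x₀ R) :
    ∃ u : ℝ → E, u 0 = x₀ ∧ (∀ t ≥ 0, HasDerivAt u (Φ t (u t)) t) ∧
      ∀ t ≥ 0, u t ∈ closedBall x₀ R := by
  obtain ⟨u, hu0, huc, hu⟩ := exists_continuous_hasDerivAt_of_mem_closedBall hR hcont hlip
  have hball : ∀ t ≥ 0, u t ∈ closedBall x₀ R := by
    intro t ht
    have hclosed : IsClosed (u ⁻¹' closedBall x₀ R) := isClosed_closedBall.preimage huc
    refine (hclosed.inter isClosed_Icc).Icc_subset_of_forall_mem_nhdsGT_of_Icc_subset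
      (by simpa [hu0] using hR) (fun T hT hin => ?_) (right_mem_Icc.2 ht)
    have hT_ball : u T ∈ ball x₀ R := hapriori u T hT.1 hu0
      (fun s hs => (hu s hs.1 (hin hs)).hasDerivWithinAt) hin
    exact mem_nhdsWithin_of_mem_nhds <| mem_of_superset
      (huc.continuousAt.preimage_mem_nhds (isOpen_ball.mem_nhds hT_ball))
      (preimage_mono ball_subset_closedBall)
  exact ⟨u, hu0, fun t ht => hu t ht (hball t ht), hball⟩

end Existence

section SpeedBounds

variable {E : Type*} [NormedAddCommGroup E] [NormedSpace ℝ E]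
  {f f' : ℝ → E} {g : ℝ → ℝ} {a b : ℝ}

lemma intervalIntegral_lt_integral_Ioi (hab : a ≤ b) (hg : IntegrableOn g (Ioi a))
    (hpos : ∀ t ∈ Ioi b, 0 < g t) : ∫ t in a..b, g t < ∫ t in Ioi a, g t := by
  have hgb : IntegrableOn g (Ioi b) := hg.mono_set (Ioi_subset_Ioi hab)
  have hsupport : Function.support g ∩ Ioi b = Ioi b :=
    inter_eq_right.2 fun t ht => (hpos t ht).ne'
  have htail : 0 < ∫ t in Ioi b, g t := by
    rw [setIntegral_pos_iff_support_of_nonneg_ae _ hgb, hsupport]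
    · simp
    · exact (ae_restrict_mem measurableSet_Ioi).mono fun t ht => (hpos t ht).le
  rw [← intervalIntegral.integral_interval_add_Ioi hg hgb]
  exact lt_add_of_pos_right _ htail

lemma norm_sub_lt_integral_Ioi_of_norm_deriv_le (hab : a ≤ b)
    (hf : ∀ t ∈ Icc a b, HasDerivWithinAt f (f' t) (Icc a b) t)
    (hle : ∀ t ∈ Ioo a b, ‖f' t‖ ≤ g t) (hg : IntegrableOn g (Ioi a))
    (hpos : ∀ t ∈ Ioi b, 0 < g t) : ‖f b - f a‖ < ∫ t in Ioi a, g t := by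
  have hderiv {t : ℝ} (ht : t ∈ Ioo a b) : HasDerivAt f (f' t) t :=
    (hf t (Ioo_subset_Icc_self ht)).hasDerivAt (Icc_mem_nhds ht.1 ht.2)
  refine lt_of_le_of_lt ?_ (intervalIntegral_lt_integral_Ioi hab hg hpos)
  refine norm_sub_le_integral_of_norm_deriv_le_of_le hab
    (fun t ht => (hf t ht).continuousWithinAt)
    (fun t ht => (hderiv ht).differentiableAt.differentiableWithinAt)
    (ae_of_all _ fun t ht => (hderiv ht).deriv ▸ hle t ht) ?_
  exact (intervalIntegrable_iff_integrableOn_Ioc_of_le hab).2 (hg.mono_set Ioc_subset_Ioi_self)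

lemma exists_tendsto_atTop_of_norm_deriv_le [CompleteSpace E]
    (hf : ∀ t ∈ Ioi a, HasDerivAt f (f' t) t) (hle : ∀ t ∈ Ioi a, ‖f' t‖ ≤ g t)
    (hg : IntegrableOn g (Ioi a)) : ∃ y, Tendsto f atTop (𝓝 y) := by
  have hint : IntegrableOn (deriv f) (Ioi a) :=
    hg.mono' (aestronglyMeasurable_deriv f _) <|
      (ae_restrict_mem measurableSet_Ioi).mono fun t ht => (hf t ht).deriv ▸ hle t ht
  exact ⟨_, tendsto_limUnder_of_hasDerivAt_of_integrableOn_Ioi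
    (fun t ht => (hf t ht).differentiableAt.hasDerivAt) hint⟩

end SpeedBounds

section PowerLawDecay

/-- The solution at time `t` of the Bernoulli equation `y' = -g y ^ (p + 1)`, `y 0 = q`, serving
as the decay bound for `‖F (u t)‖`; the function `h` of the paper is
`powerLawDecay ‖F u₀‖ (a - 2) g₁`. -/
noncomputable def powerLawDecay (q p : ℝ) (g : ℝ → ℝ) (t : ℝ) : ℝ :=
  (q ^ (-p) + p * ∫ s in (0 : ℝ)..t, g s) ^ (-(1 / p))

variable {q p a b t T : ℝ} {g : ℝ → ℝ}

lemma powerLawDecay_nonneg (hq : 0 ≤ q) (hp : 0 ≤ p) (ht : 0 ≤ t)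
    (hg : ∀ s ∈ Icc 0 t, 0 ≤ g s) : 0 ≤ powerLawDecay q p g t := by
  have hint : 0 ≤ ∫ s in (0 : ℝ)..t, g s := intervalIntegral.integral_nonneg ht hg
  unfold powerLawDecay
  positivity

lemma powerLawDecay_pos (hq : 0 < q) (hp : 0 ≤ p) (ht : 0 ≤ t)
    (hg : ∀ s ∈ Icc 0 t, 0 ≤ g s) : 0 < powerLawDecay q p g t := by
  have hint : 0 ≤ ∫ s in (0 : ℝ)..t, g s := intervalIntegral.integral_nonneg ht hg
  unfold powerLawDecay
  positivity

lemma tendsto_powerLawDecay_zero (hp : 0 < p)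
    (hg : Tendsto (fun t => ∫ s in (0 : ℝ)..t, g s) atTop atTop) :
    Tendsto (powerLawDecay q p g) atTop (𝓝 0) :=
  (tendsto_rpow_neg_atTop (one_div_pos.2 hp)).comp
    (tendsto_atTop_add_const_left _ _ (hg.const_mul_atTop hp))

lemma rpow_neg_add_integral_le {y y' : ℝ → ℝ} (hp : 0 ≤ p) (hab : a ≤ b)
    (hpos : ∀ t ∈ Icc a b, 0 < y t)
    (hy : ∀ t ∈ Icc a b, HasDerivWithinAt y (y' t) (Icc a b) t)
    (hg : IntervalIntegrable g volume a b)
    (hle : ∀ t ∈ Ioo a b, y' t ≤ -(g t) * y t ^ (p + 1)) :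
    y a ^ (-p) + p * ∫ t in a..b, g t ≤ y b ^ (-p) := by
  have hz (t : ℝ) (ht : t ∈ Icc a b) : HasDerivWithinAt (fun s => y s ^ (-p))
      (y' t * -p * y t ^ (-p - 1)) (Icc a b) t :=
    (hy t ht).rpow_const (Or.inl (hpos t ht).ne')
  have hrate (t : ℝ) (ht : t ∈ Ioo a b) : p * g t ≤ y' t * -p * y t ^ (-p - 1) := by
    have hyt : 0 < y t := hpos t (Ioo_subset_Icc_self ht)
    have hcancel : y t ^ (p + 1) * y t ^ (-p - 1) = 1 := by
      rw [← Real.rpow_add hyt, show p + 1 + (-p - 1) = 0 by ring, Real.rpow_zero]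
    calc p * g t = -(-(g t) * y t ^ (p + 1)) * (p * y t ^ (-p - 1)) := by
          linear_combination (-(p * g t)) * hcancel
      _ ≤ -y' t * (p * y t ^ (-p - 1)) :=
          mul_le_mul_of_nonneg_right (neg_le_neg (hle t ht)) (by positivity)
      _ = y' t * -p * y t ^ (-p - 1) := by ring
  have hgrowth := intervalIntegral.integral_le_sub_of_hasDeriv_right_of_le hab
    (fun t ht => (hz t ht).continuousWithinAt)
    (fun t ht => ((hz t (Ioo_subset_Icc_self ht)).hasDerivAt
      (Icc_mem_nhds ht.1 ht.2)).hasDerivWithinAt)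
    ((intervalIntegrable_iff_integrableOn_Icc_of_le hab).1 (hg.const_mul p)) hrate
  rw [intervalIntegral.integral_const_mul] at hgrowth
  linarith

variable {G : Type*} [NormedAddCommGroup G] [InnerProductSpace ℝ G] {w w' : ℝ → G}

lemma antitoneOn_norm_of_inner_deriv_nonpos
    (hw : ∀ t ∈ Icc a b, HasDerivWithinAt w (w' t) (Icc a b) t)
    (hle : ∀ t ∈ Ioo a b, ⟪w t, w' t⟫ ≤ 0) : AntitoneOn (fun t => ‖w t‖) (Icc a b) := by
  have hsq : AntitoneOn (fun t => ‖w t‖ ^ 2) (Icc a b) := by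
    refine antitoneOn_of_hasDerivWithinAt_nonpos (f' := fun t => 2 * ⟪w t, w' t⟫) (convex_Icc a b)
      (fun t ht => (hw t ht).norm_sq.continuousWithinAt)
      (fun t ht => (hw t (interior_subset ht)).norm_sq.mono interior_subset) fun t ht => ?_
    rw [interior_Icc] at ht
    linarith [hle t ht]
  exact fun s hs t ht hst => (sq_le_sq₀ (norm_nonneg _) (norm_nonneg _)).1 (hsq hs ht hst)

lemma norm_rpow_neg_add_integral_le (hp : 0 ≤ p) (hab : a ≤ b) (hne : ∀ t ∈ Icc a b, w t ≠ 0)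
    (hw : ∀ t ∈ Icc a b, HasDerivWithinAt w (w' t) (Icc a b) t)
    (hg : IntervalIntegrable g volume a b)
    (hle : ∀ t ∈ Ioo a b, ⟪w t, w' t⟫ ≤ -(g t) * ‖w t‖ ^ (p + 2)) :
    ‖w a‖ ^ (-p) + p * ∫ t in a..b, g t ≤ ‖w b‖ ^ (-p) := by
  have hsq (t r : ℝ) : (‖w t‖ ^ 2) ^ r = ‖w t‖ ^ (2 * r) := by
    rw [← Real.rpow_natCast, ← Real.rpow_mul (norm_nonneg _), Nat.cast_ofNat]
  have hle_sq (t : ℝ) (ht : t ∈ Ioo a b) :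
      2 * ⟪w t, w' t⟫ ≤ -(2 * g t) * (‖w t‖ ^ 2) ^ (p / 2 + 1) := by
    rw [hsq, show 2 * (p / 2 + 1) = p + 2 by ring]
    linarith [hle t ht]
  have hbernoulli := rpow_neg_add_integral_le (y := fun t => ‖w t‖ ^ 2)
    (div_nonneg hp zero_le_two) hab (fun t ht => pow_pos (norm_pos_iff.2 (hne t ht)) 2)
    (fun t ht => (hw t ht).norm_sq) (hg.const_mul 2) hle_sq
  rw [hsq, hsq, intervalIntegral.integral_const_mul, ← mul_assoc,
    div_mul_cancel₀ p two_ne_zero, show 2 * -(p / 2) = -p by ring] at hbernoulli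
  exact hbernoulli

lemma norm_le_powerLawDecay (hp : 0 < p) (hT : 0 ≤ T) (hg_nonneg : ∀ t ∈ Icc 0 T, 0 ≤ g t)
    (hg : IntervalIntegrable g volume 0 T)
    (hw : ∀ t ∈ Icc 0 T, HasDerivWithinAt w (w' t) (Icc 0 T) t)
    (hle : ∀ t ∈ Icc 0 T, ⟪w t, w' t⟫ ≤ -(g t) * ‖w t‖ ^ (p + 2)) :
    ‖w T‖ ≤ powerLawDecay ‖w 0‖ p g T := by
  rcases eq_or_ne (w T) 0 with hwT | hwT
  · rw [hwT, norm_zero]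
    exact powerLawDecay_nonneg (norm_nonneg _) hp.le hT hg_nonneg
  have hanti : AntitoneOn (fun t => ‖w t‖) (Icc 0 T) :=
    antitoneOn_norm_of_inner_deriv_nonpos hw fun t ht => by
      have ht := Ioo_subset_Icc_self ht
      exact (hle t ht).trans (mul_nonpos_of_nonpos_of_nonneg (neg_nonpos.2 (hg_nonneg t ht))
        (Real.rpow_nonneg (norm_nonneg _) _))
  have hne (t : ℝ) (ht : t ∈ Icc 0 T) : w t ≠ 0 :=
    norm_pos_iff.1 ((norm_pos_iff.2 hwT).trans_le (hanti ht (right_mem_Icc.2 hT) ht.2))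
  have hint : 0 ≤ ∫ t in (0 : ℝ)..T, g t := intervalIntegral.integral_nonneg hT hg_nonneg
  have hw0 : 0 < ‖w 0‖ := norm_pos_iff.2 (hne 0 (left_mem_Icc.2 hT))
  rw [powerLawDecay, one_div, ← inv_neg,
    Real.le_rpow_inv_iff_of_neg (norm_pos_iff.2 hwT) (by positivity) (neg_lt_zero.2 hp)]
  exact norm_rpow_neg_add_integral_le hp.le hT hne hw hg
    fun t ht => hle t (Ioo_subset_Icc_self ht)

end PowerLawDecay

section DynamicalSystemsMethod

variable {E G : Type*} [NormedAddCommGroup E] [NormedSpace ℝ E]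
  [NormedAddCommGroup G] [InnerProductSpace ℝ G] {F : E → G} {F' : E → E →L[ℝ] G}
  {Φ : ℝ → E → E} {u : ℝ → E}

lemma norm_comp_le_powerLawDecay_of_isIntegralCurveOn {s : Set E} {g : ℝ → ℝ} {p T : ℝ}
    (hF : ∀ x ∈ s, HasFDerivWithinAt F (F' x) s x) (hp : 0 < p) (hT : 0 ≤ T)
    (hg_nonneg : ∀ t ∈ Icc 0 T, 0 ≤ g t) (hg : IntervalIntegrable g volume 0 T)
    (hdecay : ∀ t ∈ Icc 0 T, ∀ x ∈ s, ⟪F' x (Φ t x), F x⟫ ≤ -(g t) * ‖F x‖ ^ (p + 2))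
    (hu : IsIntegralCurveOn u Φ (Icc 0 T)) (hus : MapsTo u (Icc 0 T) s) :
    ‖F (u T)‖ ≤ powerLawDecay ‖F (u 0)‖ p g T := by
  refine norm_le_powerLawDecay (w := F ∘ u) hp hT hg_nonneg hg
    (fun t ht => (hF (u t) (hus ht)).comp_hasDerivWithinAt t (hu t ht) hus) fun t ht => ?_
  rw [real_inner_comm]
  exact hdecay t ht (u t) (hus ht)

theorem dsm_theorem_three_general [CompleteSpace E] {x₀ : E} {R a : ℝ} {g₁ g₂ : ℝ → ℝ}
    (hF : ∀ x ∈ closedBall x₀ R, HasFDerivWithinAt F (F' x) (closedBall x₀ R) x)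
    (hFx₀ : F x₀ ≠ 0) (hR : 0 ≤ R)
    (hΦcont : ∀ x ∈ closedBall x₀ R, ContinuousOn (fun t => Φ t x) (Ici 0))
    (hΦlip : ∀ T : ℝ, ∃ L : ℝ≥0, ∀ t ∈ Icc 0 T, LipschitzOnWith L (Φ t) (closedBall x₀ R))
    (hg₁ : ∀ t ≥ 0, 0 ≤ g₁ t) (hg₂ : ∀ t ≥ 0, 0 < g₂ t)
    (hg₁int : ∀ t ≥ 0, IntervalIntegrable g₁ volume 0 t) (ha : 2 < a)
    (hdecay : ∀ t ≥ 0, ∀ x ∈ closedBall x₀ R, ⟪F' x (Φ t x), F x⟫ ≤ -(g₁ t) * ‖F x‖ ^ a)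
    (hspeed : ∀ t ≥ 0, ∀ x ∈ closedBall x₀ R, ‖Φ t x‖ ≤ g₂ t * ‖F x‖)
    (hg₁lim : Tendsto (fun t => ∫ s in (0 : ℝ)..t, g₁ s) atTop atTop)
    (hint : IntegrableOn (fun t => g₂ t * powerLawDecay ‖F x₀‖ (a - 2) g₁ t) (Ioi 0))
    (hle : ∫ t in Ioi 0, g₂ t * powerLawDecay ‖F x₀‖ (a - 2) g₁ t ≤ R) :
    ∃ u : ℝ → E, u 0 = x₀ ∧ (∀ t ≥ 0, HasDerivAt u (Φ t (u t)) t) ∧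
      (∀ t ≥ 0, u t ∈ closedBall x₀ R) ∧
      ∃ y : E, Tendsto u atTop (𝓝 y) ∧ y ∈ closedBall x₀ R ∧ F y = 0 := by
  have hp : 0 < a - 2 := sub_pos.2 ha
  set h : ℝ → ℝ := powerLawDecay ‖F x₀‖ (a - 2) g₁
  have hF_le {u : ℝ → E} {T : ℝ} (hT : 0 ≤ T) (hu₀ : u 0 = x₀)
      (hu : IsIntegralCurveOn u Φ (Icc 0 T)) (huB : MapsTo u (Icc 0 T) (closedBall x₀ R)) :
      ‖F (u T)‖ ≤ h T := by
    simpa only [hu₀] using norm_comp_le_powerLawDecay_of_isIntegralCurveOn hF hp hT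
      (fun t ht => hg₁ t ht.1) (hg₁int T hT)
      (fun t ht => by simpa only [sub_add_cancel] using hdecay t ht.1) hu huB
  have hΦ_le {x : E} {t : ℝ} (ht : 0 ≤ t) (hx : x ∈ closedBall x₀ R) (hFx : ‖F x‖ ≤ h t) :
      ‖Φ t x‖ ≤ g₂ t * h t :=
    (hspeed t ht x hx).trans (mul_le_mul_of_nonneg_left hFx (hg₂ t ht).le)
  have hgh_pos (t : ℝ) (ht : 0 ≤ t) : 0 < g₂ t * h t :=
    mul_pos (hg₂ t ht)
      (powerLawDecay_pos (norm_pos_iff.2 hFx₀) hp.le ht fun s hs => hg₁ s hs.1)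
  obtain ⟨u, hu₀, hu, huB⟩ := exists_hasDerivAt_mem_closedBall_of_apriori hR hΦcont hΦlip
    fun u T hT hu₀ hu huB => by
      rw [mem_ball_iff_norm, ← hu₀]
      refine (norm_sub_lt_integral_Ioi_of_norm_deriv_le hT hu (fun t ht => ?_) hint
        fun t ht => hgh_pos t (hT.trans ht.le)).trans_le hle
      have hsub : Icc 0 t ⊆ Icc 0 T := Icc_subset_Icc_right ht.2.le
      exact hΦ_le ht.1.le (huB (Ioo_subset_Icc_self ht))
        (hF_le ht.1.le hu₀ (hu.mono hsub) (huB.mono_left hsub))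
  have hFu (t : ℝ) (ht : 0 ≤ t) : ‖F (u t)‖ ≤ h t :=
    hF_le ht hu₀ (fun s hs => (hu s hs.1).hasDerivWithinAt) fun s hs => huB s hs.1
  obtain ⟨y, hy⟩ := exists_tendsto_atTop_of_norm_deriv_le (fun t ht => hu t (le_of_lt ht))
    (fun t ht => hΦ_le (le_of_lt ht) (huB t (le_of_lt ht)) (hFu t (le_of_lt ht))) hint
  have huB_eventually : ∀ᶠ t in atTop, u t ∈ closedBall x₀ R := (eventually_ge_atTop 0).mono huB
  have hyB : y ∈ closedBall x₀ R := isClosed_closedBall.mem_of_tendsto hy huB_eventually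
  have hFy : Tendsto (fun t => F (u t)) atTop (𝓝 (F y)) :=
    (hF y hyB).continuousWithinAt.tendsto.comp (tendsto_nhdsWithin_iff.2 ⟨hy, huB_eventually⟩)
  exact ⟨u, hu₀, hu, huB, y, hy, hyB, tendsto_nhds_unique hFy <| squeeze_zero_norm'
    ((eventually_ge_atTop 0).mono hFu) (tendsto_powerLawDecay_zero hp hg₁lim)⟩

end DynamicalSystemsMethod

/-- **Theorem 3.** If (2.2) holds with `a > 2`, (1.4) and (2.6) hold, then the
solution of (1.6) exists for all `t ≥ 0`, stays in `B`, converges strongly to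
some `y ∈ B`, and `F(y) = 0`. Here
`h(t) = [‖F(u₀)‖^{−(a−2)} + (a−2)∫₀ᵗ g₁]^{−1/(a−2)}`. -/
theorem dsm_theorem_three
    {H : Type*} [NormedAddCommGroup H] [InnerProductSpace ℝ H] [CompleteSpace H]
    (F : H → H) (F' : H → H →L[ℝ] H)
    (hF : ∀ u : H, HasFDerivAt F (F' u) u)
    (u₀ : H) (hFu₀ : F u₀ ≠ 0) (R : ℝ) (hR : 0 < R)
    (B : Set H) (hB : B = {u : H | ‖u - u₀‖ ≤ R})
    (Φ : ℝ → H → H)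
    (hΦcont : ∀ u ∈ B, ContinuousOn (fun t => Φ t u) (Set.Ici (0:ℝ)))
    (L : NNReal) (hΦlip : ∀ t ∈ Set.Ici (0:ℝ), LipschitzOnWith L (Φ t) B)
    (g₁ g₂ : ℝ → ℝ)
    (hg₁pos : ∀ t ≥ (0:ℝ), 0 < g₁ t)
    (hg₂pos : ∀ t ≥ (0:ℝ), 0 < g₂ t)
    (hg₂cont : ContinuousOn g₂ (Set.Ici (0:ℝ)))
    (hg₁loc : ∀ t ≥ (0:ℝ), IntervalIntegrable g₁ volume 0 t)
    (a : ℝ) (ha : 2 < a)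
    (h : ℝ → ℝ)
    (hh : h = fun t =>
      (‖F u₀‖ ^ (-(a - 2)) + (a - 2) * ∫ s in (0:ℝ)..t, g₁ s) ^ (-(1 / (a - 2))))
    (h22 : ∀ t ≥ (0:ℝ), ∀ u ∈ B, ⟪F' u (Φ t u), F u⟫ ≤ -(g₁ t) * ‖F u‖ ^ a)
    (h13 : ∀ t ≥ (0:ℝ), ∀ u ∈ B, ‖Φ t u‖ ≤ g₂ t * ‖F u‖)
    (h14 : Tendsto (fun t => ∫ s in (0:ℝ)..t, g₁ s) atTop atTop)
    (h26int : IntegrableOn (fun s => g₂ s * h s) (Set.Ici (0:ℝ)))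
    (h26 : ∫ s in Set.Ioi (0:ℝ), g₂ s * h s ≤ R) :
    ∃ u : ℝ → H, u 0 = u₀ ∧
      (∀ t ≥ (0:ℝ), HasDerivAt u (Φ t (u t)) t) ∧
      (∀ t ≥ (0:ℝ), u t ∈ B) ∧
      ∃ y : H, Tendsto u atTop (nhds y) ∧ y ∈ B ∧ F y = 0 := by
  obtain rfl : B = closedBall u₀ R := hB.trans (Set.ext fun _ => mem_closedBall_iff_norm.symm)
  subst hh
  exact dsm_theorem_three_general (fun u _ => (hF u).hasFDerivWithinAt) hFu₀ hR.le hΦcont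
    (fun _ => ⟨L, fun t ht => hΦlip t ht.1⟩) (fun t ht => (hg₁pos t ht).le) hg₂pos hg₁loc ha h22 h13
    h14 (h26int.mono_set Ioi_subset_Ici_self) h26
end
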